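/- arXiv:1112.0920 — 2 statements merged into one kernel-verified Lean document; each statement's English description precedes it below -/
import Mathlib

section
/- Let E be a field, Γ a subgroup of ℝ, and let R ⊆ E((t^Γ)) be the set of series whose support intersected with any interval (−∞, γ) is finite. Then R coincides with the completion of the subfield E(t^Γ) (generated by E and all t^γ, γ ∈ Γ) with respect to the valuation v; in particular the subring E[t^Γ] is dense in R. -/
open scoped Pointwise

namespace HahnSeries

/-- The subring of Hahn series over `Γ ≤ ℝ` whose support meets every interval `(-∞, γ)` in a
finite set. -/
def omegaTypeSubring (E : Type*) [Field E] (Γ : AddSubgroup ℝ) : Subring (HahnSeries Γ E) where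
  carrier := {a | ∀ γ : ℝ, {g : Γ | g ∈ a.support ∧ (g : ℝ) < γ}.Finite}
  zero_mem' γ := by simp
  one_mem' γ := (Set.finite_singleton (0 : Γ)).subset fun g hg => by
    by_contra h
    exact hg.1 (by rw [coeff_one, if_neg (by simpa using h)])
  add_mem' {a b} ha hb γ := ((ha γ).union (hb γ)).subset fun g hg =>
    (support_add_subset _ _ hg.1).imp (fun h => ⟨h, hg.2⟩) (fun h => ⟨h, hg.2⟩)
  neg_mem' {a} ha γ := by simpa using ha γ
  mul_mem' {a b} ha hb γ :=
    ((ha (γ - (b.order : ℝ))).add (hb (γ - (a.order : ℝ)))).subset fun g hg => by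
      obtain ⟨x, hx, y, hy, rfl⟩ := support_mul_subset hg.1
      have hxo : (a.order : ℝ) ≤ x := order_le_of_coeff_ne_zero hx
      have hyo : (b.order : ℝ) ≤ y := order_le_of_coeff_ne_zero hy
      have hxy : (x : ℝ) + y < γ := hg.2
      exact ⟨x, ⟨hx, by linarith⟩, y, ⟨hy, by linarith⟩, rfl⟩

variable {E : Type*} [Field E] {Γ : AddSubgroup ℝ}

theorem single_mem_omegaTypeSubring (g : Γ) (c : E) : single g c ∈ omegaTypeSubring E Γ :=
  fun _ => (Set.finite_singleton g).subset fun _ hx => support_single_subset hx.1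

/-- The subring of series with support finite below every bound is closed in the valuation
topology. -/
theorem mem_omegaTypeSubring_of_forall_exists_lt_order {a : HahnSeries Γ E}
    (h : ∀ γ : ℝ, ∃ b ∈ omegaTypeSubring E Γ, a - b = 0 ∨ γ < ((a - b).order : ℝ)) :
    a ∈ omegaTypeSubring E Γ := by
  intro γ
  obtain ⟨b, hb, hab⟩ := h γ
  refine (hb γ).subset fun g hg => ⟨fun hbg => ?_, hg.2⟩
  have hne : (a - b).coeff g ≠ 0 := by simpa [hbg] using hg.1
  rcases hab with hab | hab
  · simp [hab] at hne
  · have hle : ((a - b).order : ℝ) ≤ g := order_le_of_coeff_ne_zero hne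
    linarith [hg.2]

theorem inv_one_sub_mem_omegaTypeSubring {u : HahnSeries Γ E} (hu : u ∈ omegaTypeSubring E Γ)
    (hpos : 0 < (u.order : ℝ)) : (1 - u)⁻¹ ∈ omegaTypeSubring E Γ := by
  rcases eq_or_ne (1 - u) 0 with h0 | h0
  · simp [h0, zero_mem]
  refine mem_omegaTypeSubring_of_forall_exists_lt_order fun γ => ?_
  obtain ⟨n, hn⟩ := Archimedean.arch (γ - ((1 - u)⁻¹.order : ℝ) + 1) hpos
  refine ⟨∑ k ∈ Finset.range n, u ^ k, sum_mem fun k _ => pow_mem hu k, Or.inr ?_⟩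
  have hsub : (1 - u)⁻¹ - ∑ k ∈ Finset.range n, u ^ k = u ^ n * (1 - u)⁻¹ := by
    have hgeom := geom_sum_mul_neg u n
    field_simp
    rw [mul_comm, hgeom]
    ring
  have hu0 : u ≠ 0 := by
    rintro rfl
    simp at hpos
  rw [hsub, order_mul (pow_ne_zero _ hu0) (inv_ne_zero h0), order_pow]
  push_cast
  linarith

theorem inv_mem_omegaTypeSubring {a : HahnSeries Γ E} (ha : a ∈ omegaTypeSubring E Γ) :
    a⁻¹ ∈ omegaTypeSubring E Γ := by
  rcases eq_or_ne a 0 with rfl | h0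
  · simp [zero_mem]
  set b : HahnSeries Γ E := single (-a.order) a.leadingCoeff⁻¹ with hb
  have hlead : a.leadingCoeff ≠ 0 := leadingCoeff_ne_zero.mpr h0
  have hbmem : b ∈ omegaTypeSubring E Γ := single_mem_omegaTypeSubring _ _
  have hb0 : b ≠ 0 := single_ne_zero (inv_ne_zero hlead)
  have hfactor : a⁻¹ = b * (1 - (1 - b * a))⁻¹ := by
    rw [sub_sub_cancel]
    field_simp
  rw [hfactor]
  refine mul_mem hbmem ?_
  rcases eq_or_ne (1 - b * a) 0 with hu | hu
  · simp [hu, one_mem]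
  refine inv_one_sub_mem_omegaTypeSubring (sub_mem (one_mem _) (mul_mem hbmem ha)) ?_
  have hcoeff : (1 - b * a).coeff (1 - b * a).order ≠ 0 := coeff_order_eq_zero.not.mpr hu
  generalize (1 - b * a).order = g at hcoeff
  by_contra hg
  have hle : g ≤ 0 := not_lt.mp hg
  apply hcoeff
  rw [coeff_sub, hb, coeff_single_mul, coeff_one, sub_neg_eq_add]
  rcases hle.eq_or_lt with rfl | hlt
  · rw [if_pos rfl, zero_add, ← leadingCoeff_eq, inv_mul_cancel₀ hlead, sub_self]
  · rw [if_neg hlt.ne, coeff_eq_zero_of_lt_order (by simpa using hlt), mul_zero, sub_zero]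

/-- The Hahn series over `Γ ≤ ℝ` with support finite below every bound form a field. -/
def omegaTypeSubfield (E : Type*) [Field E] (Γ : AddSubgroup ℝ) : Subfield (HahnSeries Γ E) where
  __ := omegaTypeSubring E Γ
  inv_mem' _ := inv_mem_omegaTypeSubring

theorem closure_le_omegaTypeSubfield :
    Subfield.closure (Set.range (C : E →+* HahnSeries Γ E) ∪ {x | ∃ γ : Γ, x = single γ (1 : E)})
      ≤ omegaTypeSubfield E Γ := by
  rw [Subfield.closure_le]
  rintro x (⟨c, rfl⟩ | ⟨g, rfl⟩)
  · exact single_mem_omegaTypeSubring 0 c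
  · exact single_mem_omegaTypeSubring g 1

/-- The group algebra is dense in the series with support finite below every bound. -/
theorem exists_mem_closure_lt_order {a : HahnSeries Γ E} (ha : a ∈ omegaTypeSubring E Γ) (γ : ℝ) :
    ∃ b ∈ Subring.closure
        (Set.range (C : E →+* HahnSeries Γ E) ∪ {x | ∃ γ : Γ, x = single γ (1 : E)}),
      a - b = 0 ∨ γ < ((a - b).order : ℝ) := by
  set s := (ha (γ + 1)).toFinset with hs
  refine ⟨∑ g ∈ s, C (a.coeff g) * single g 1, sum_mem fun g _ => mul_mem
    (Subring.subset_closure (Or.inl ⟨_, rfl⟩)) (Subring.subset_closure (Or.inr ⟨g, rfl⟩)), ?_⟩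
  refine or_iff_not_imp_left.mpr fun hne => ?_
  have hcoeff := coeff_order_eq_zero.not.mpr hne
  generalize (a - ∑ g ∈ s, C (a.coeff g) * single g 1).order = g at hcoeff
  by_contra hg
  apply hcoeff
  have hmem : g ∈ s ↔ a.coeff g ≠ 0 := by
    have hlt : (g : ℝ) < γ + 1 := by linarith
    simp [hs, hlt]
  simp only [C_apply, single_mul_single, zero_add, mul_one, coeff_sub, coeff_sum, coeff_single]
  refine sub_eq_zero.mpr ((Finset.sum_eq_single g (fun x _ hx => if_neg hx.symm) fun hgs => ?_).trans
    (if_pos rfl)).symm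
  simpa using not_not.mp (hmem.not.mp hgs)

end HahnSeries

/-- Let `E` be a field and `Γ ≤ ℝ`.  The set `R` of series in `E((t^Γ))` whose support
meets every interval `(−∞, γ)` in a finite set coincides with the completion of the
subfield `E(t^Γ)` (generated by `E` and the monomials `t^γ`) with respect to the
valuation: it is exactly the set of elements approximable to arbitrary valuation by
elements of `E(t^Γ)`; in particular the subring `E[t^Γ]` is dense in `R`. -/
theorem completion_eq_omega_type_series (E : Type*) [Field E] (Γ : AddSubgroup ℝ) :
    ({a : HahnSeries ↥Γ E | ∀ γ : ℝ, {g : ↥Γ | g ∈ a.support ∧ (g : ℝ) < γ}.Finite}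
      = {a : HahnSeries ↥Γ E | ∀ γ0 : ℝ,
          ∃ b ∈ Subfield.closure
              (Set.range (HahnSeries.C : E →+* HahnSeries ↥Γ E) ∪
                {x | ∃ γ : ↥Γ, x = HahnSeries.single γ (1 : E)}),
            a - b = 0 ∨ γ0 < (((a - b).order : ↥Γ) : ℝ)})
    ∧ ∀ a : HahnSeries ↥Γ E,
        (∀ γ : ℝ, {g : ↥Γ | g ∈ a.support ∧ (g : ℝ) < γ}.Finite) →
        ∀ γ0 : ℝ,
          ∃ b ∈ Subring.closure
              (Set.range (HahnSeries.C : E →+* HahnSeries ↥Γ E) ∪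
                {x | ∃ γ : ↥Γ, x = HahnSeries.single γ (1 : E)}),
            a - b = 0 ∨ γ0 < (((a - b).order : ↥Γ) : ℝ) := by
  refine ⟨Set.Subset.antisymm (fun a ha γ0 => ?_) fun a ha => ?_,
    fun a ha => HahnSeries.exists_mem_closure_lt_order ha⟩
  · obtain ⟨b, hb, hab⟩ := HahnSeries.exists_mem_closure_lt_order ha γ0
    exact ⟨b, Subfield.subring_closure_le _ hb, hab⟩
  · refine HahnSeries.mem_omegaTypeSubring_of_forall_exists_lt_order fun γ => ?_
    obtain ⟨b, hb, hab⟩ := ha γ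
    exact ⟨b, HahnSeries.closure_le_omegaTypeSubfield hb, hab⟩
end

section
/- Let E be a field of characteristic p > 0, Γ an ordered subgroup of ℝ with ⋂_n p^nΓ = (0). Every element of E((t^Γ)) that is separably algebraic over E(t^Γ) has support that is either finite, or of order type ω and cofinal in ℝ. -/
set_option synthInstance.maxHeartbeats 1000000
set_option maxHeartbeats 1000000

/-- An infinite subset of a linear order all of whose proper initial segments are finite has
order type `ω`. -/
theorem Set.Infinite.exists_strictMono_range_eq {α : Type*} [LinearOrder α] {S : Set α}
    (hS : S.Infinite) (hfin : ∀ a ∈ S, (S ∩ Set.Iio a).Finite) :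
    ∃ φ : ℕ → α, StrictMono φ ∧ Set.range φ = S := by
  classical
  have : Infinite S := hS.to_subtype
  let rank : S → ℕ := fun a => (S ∩ Set.Iio (a : α)).ncard
  have hrank : StrictMono rank := by
    intro a b hab
    refine Set.ncard_lt_ncard ?_ (hfin b b.2)
    refine ⟨fun c hc => ⟨hc.1, lt_trans hc.2 hab⟩, fun h => ?_⟩
    exact lt_irrefl (a : α) (h ⟨a.2, hab⟩).2
  have : Infinite (Set.range rank) := (Set.infinite_range_of_injective hrank.injective).to_subtype
  let e : ℕ ≃o S := (Nat.Subtype.orderIsoOfNat (Set.range rank)).trans (hrank.orderIso rank).symm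
  refine ⟨fun n => (e n : α), fun a b hab => e.strictMono hab, ?_⟩
  ext a
  constructor
  · rintro ⟨n, rfl⟩
    exact (e n).2
  · intro ha
    exact ⟨e.symm ⟨a, ha⟩, by simp⟩

/-- A well-ordered set of reals with an infinite bounded initial segment has a least
accumulation point. -/
theorem Set.IsWF.exists_least_accumulation {S : Set ℝ} (hS : S.IsWF) {r : ℝ}
    (hr : (S ∩ Set.Iio r).Infinite) :
    ∃ s : ℝ, (∀ b < s, (S ∩ Set.Iio b).Finite) ∧ ∀ b < s, ∃ a ∈ S, b < a ∧ a < s := by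
  set R : Set ℝ := {b | (S ∩ Set.Iio b).Infinite}
  have hne : S.Nonempty := hr.nonempty.mono Set.inter_subset_left
  have hbdd : BddBelow R := by
    refine ⟨hS.min hne, fun b hb => ?_⟩
    obtain ⟨a, ha, hab⟩ := Set.Infinite.nonempty hb
    exact (hS.min_le hne ha).trans (le_of_lt hab)
  have hlow : ∀ b < sInf R, (S ∩ Set.Iio b).Finite := fun b hb => by
    by_contra h
    exact absurd (csInf_le hbdd h) (not_le.2 hb)
  have hinf : (S ∩ Set.Iio (sInf R)).Infinite := by
    intro hfin
    have hcut : ∃ u > sInf R, S ∩ Set.Ioo (sInf R) u = ∅ := by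
      by_cases hgt : (S ∩ Set.Ioi (sInf R)).Nonempty
      · have hw : (S ∩ Set.Ioi (sInf R)).IsWF := hS.mono Set.inter_subset_left
        refine ⟨hw.min hgt, (hw.min_mem hgt).2, ?_⟩
        refine Set.eq_empty_of_forall_notMem fun a ha => ?_
        exact absurd (hw.min_le hgt ⟨ha.1, ha.2.1⟩) (not_le.2 ha.2.2)
      · refine ⟨sInf R + 1, by simp, Set.eq_empty_of_forall_notMem fun a ha => ?_⟩
        exact hgt ⟨a, ha.1, ha.2.1⟩
    obtain ⟨u, hu, hempty⟩ := hcut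
    obtain ⟨b, hb, hbu⟩ := exists_lt_of_csInf_lt ⟨r, hr⟩ hu
    refine hb ((hfin.union (Set.finite_singleton (sInf R))).subset fun a ha => ?_)
    rcases lt_trichotomy a (sInf R) with h | h | h
    · exact Or.inl ⟨ha.1, h⟩
    · exact Or.inr h
    · exact absurd (hempty ▸ (⟨ha.1, h, lt_trans ha.2 hbu⟩ : a ∈ S ∩ Set.Ioo (sInf R) u))
        (Set.notMem_empty a)
  refine ⟨sInf R, hlow, fun b hb => ?_⟩
  by_contra! h
  obtain ⟨c, hbc, hc⟩ := exists_between hb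
  refine hinf ((hlow c hc).subset fun a ha => ⟨ha.1, ?_⟩)
  refine lt_of_le_of_lt ?_ hbc
  by_contra! hab
  exact absurd ha.2 (not_lt.2 (h a ha.1 hab))

namespace HahnSeries

variable {E : Type*} [Field E] {Γ : AddSubgroup ℝ}

theorem coeff_sum_single_of_mem {F : Finset Γ} (f : Γ → E) {γ : Γ} (hγ : γ ∈ F) :
    (∑ ε ∈ F, single ε (f ε)).coeff γ = f γ := by
  rw [coeff_sum, Finset.sum_eq_single_of_mem γ hγ fun ε _ hε => coeff_single_of_ne hε.symm,
    coeff_single_same]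

theorem coeff_sum_single_of_notMem {F : Finset Γ} (f : Γ → E) {γ : Γ} (hγ : γ ∉ F) :
    (∑ ε ∈ F, single ε (f ε)).coeff γ = 0 := by
  rw [coeff_sum]
  exact Finset.sum_eq_zero fun ε hε => coeff_single_of_ne fun h => hγ (h ▸ hε)

theorem le_of_mem_support_pow {w : HahnSeries Γ E} {b : ℝ}
    (hw : ∀ γ ∈ w.support, b ≤ (γ : ℝ)) (k : ℕ) :
    ∀ γ ∈ (w ^ k).support, k * b ≤ (γ : ℝ) := by
  induction k with
  | zero =>
    intro γ hγ
    have : γ = 0 := by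
      by_contra h
      exact hγ (by simp [coeff_one, h])
    simp [this]
  | succ k ih =>
    intro γ hγ
    rw [pow_succ] at hγ
    obtain ⟨a, ha, c, hc, rfl⟩ := support_mul_subset hγ
    have h₁ := ih a ha
    have h₂ := hw c hc
    push_cast
    linarith

theorem charP_of_coeff (p : ℕ) [CharP E p] : CharP (HahnSeries Γ E) p :=
  charP_of_injective_ringHom (f := (C : E →+* HahnSeries Γ E)) C_injective p

/-- Below `p ^ n * b`, where `x` has only finitely many exponents below `b`, the exponents of
`x ^ p ^ n` are exactly `p ^ n` times those of `x`. -/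
theorem mem_support_pow_char_pow_iff (p : ℕ) [Fact p.Prime] [CharP E p] (n : ℕ)
    {x : HahnSeries Γ E} {b : ℝ} (hfin : {γ ∈ x.support | (γ : ℝ) < b}.Finite)
    {γ : Γ} (hγ : (γ : ℝ) < (p : ℝ) ^ n * b) :
    γ ∈ (x ^ p ^ n).support ↔ ∃ ε ∈ x.support, γ = p ^ n • ε := by
  have := charP_of_coeff (E := E) (Γ := Γ) p
  have hp : (0 : ℝ) < (p : ℝ) ^ n := by
    have := (Fact.out : p.Prime).pos
    positivity
  have hp' : p ^ n ≠ 0 := pow_ne_zero _ (Fact.out : p.Prime).ne_zero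
  set u : HahnSeries Γ E := ∑ ε ∈ hfin.toFinset, single ε (x.coeff ε) with hu
  have hucoeff : ∀ ε : Γ, (ε : ℝ) < b → u.coeff ε = x.coeff ε := by
    intro ε hε
    by_cases h : ε ∈ x.support
    · exact coeff_sum_single_of_mem _ ((Set.Finite.mem_toFinset _).2 ⟨h, hε⟩)
    · rw [hu, coeff_sum_single_of_notMem _ fun h' => h ((Set.Finite.mem_toFinset _).1 h').1]
      exact (not_not.1 h).symm
  have hw : ∀ δ ∈ (x - u).support, b ≤ (δ : ℝ) := by
    intro δ hδ
    by_contra! hlt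
    exact hδ (by rw [coeff_sub, hucoeff δ hlt, sub_self])
  have hcoeff : (x ^ p ^ n).coeff γ = (u ^ p ^ n).coeff γ := by
    have hz : ((x - u) ^ p ^ n).coeff γ = 0 := by
      by_contra h
      have := le_of_mem_support_pow hw _ γ h
      push_cast at this
      linarith
    have hsplit : x ^ p ^ n = u ^ p ^ n + (x - u) ^ p ^ n := by
      rw [← add_pow_char_pow, add_sub_cancel]
    rw [hsplit, coeff_add, hz, add_zero]
  have hpow : (u ^ p ^ n).coeff γ =
      ∑ ε ∈ hfin.toFinset, (single (p ^ n • ε) (x.coeff ε ^ p ^ n)).coeff γ := by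
    simp only [hu, sum_pow_char_pow, coeff_sum, single_pow]
  rw [mem_support, hcoeff, hpow]
  constructor
  · intro h
    obtain ⟨ε, hε, hne⟩ := Finset.exists_ne_zero_of_sum_ne_zero h
    refine ⟨ε, ((Set.Finite.mem_toFinset _).1 hε).1, ?_⟩
    by_contra h'
    exact hne (coeff_single_of_ne h')
  · rintro ⟨ε, hε, rfl⟩
    have hεb : (ε : ℝ) < b := by
      have h : (p : ℝ) ^ n * (ε : ℝ) < (p : ℝ) ^ n * b := by simpa using hγ
      exact lt_of_mul_lt_mul_left h hp.le
    rw [Finset.sum_eq_single_of_mem ε (hfin.mem_toFinset.2 ⟨hε, hεb⟩), coeff_single_same]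
    · exact pow_ne_zero _ hε
    · intro δ _ hδ
      exact coeff_single_of_ne fun h => hδ (nsmul_right_injective hp' h).symm

theorem finite_support_of_mem_closure {y : HahnSeries Γ E}
    (hy : y ∈ Subring.closure (Set.range (C : E →+* HahnSeries Γ E) ∪
      {y | ∃ γ : Γ, y = single γ (1 : E)})) : y.support.Finite := by
  induction hy using Subring.closure_induction with
  | mem y hy =>
    rcases hy with ⟨e, rfl⟩ | ⟨γ, rfl⟩
    · exact (Set.finite_singleton _).subset support_single_subset
    · exact (Set.finite_singleton _).subset support_single_subset
  | zero => simp
  | one => exact (Set.finite_singleton (0 : Γ)).subset support_single_subset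
  | add y z _ _ hy hz => exact (hy.union hz).subset (support_add_subset y z)
  | neg y _ hy => simpa using hy
  | mul y z _ _ hy hz => exact (hy.add hz).subset support_mul_subset

theorem eq_sum_single_of_finite_support {y : HahnSeries Γ E} (hy : y.support.Finite) :
    y = ∑ δ ∈ hy.toFinset, single δ (y.coeff δ) := by
  ext γ
  by_cases h : γ ∈ y.support
  · exact (coeff_sum_single_of_mem _ (hy.mem_toFinset.2 h)).symm
  · rw [coeff_sum_single_of_notMem _ fun h' => h (hy.mem_toFinset.1 h')]
    exact not_not.1 h

end HahnSeries

/-- Finitely many elements of the subfield generated by a set have a common denominator in the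
subring generated by that set. -/
theorem Subfield.exists_common_denominator {F : Type*} [Field F] {s : Set F} {ι : Type*}
    (T : Finset ι) (f : ι → F) (hf : ∀ i ∈ T, f i ∈ Subfield.closure s) :
    ∃ c ∈ Subring.closure s, c ≠ 0 ∧ ∀ i ∈ T, c * f i ∈ Subring.closure s := by
  classical
  induction T using Finset.induction_on with
  | empty => exact ⟨1, one_mem _, one_ne_zero, by simp⟩
  | insert i T _ ih =>
    obtain ⟨c, hc, hc0, hcT⟩ := ih fun j hj => hf j (Finset.mem_insert_of_mem hj)
    obtain ⟨y, hy, z, hz, hyz⟩ := Subfield.mem_closure_iff.1 (hf i (Finset.mem_insert_self i T))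
    by_cases hz0 : z = 0
    · refine ⟨c, hc, hc0, fun j hj => ?_⟩
      rcases Finset.mem_insert.1 hj with rfl | hj
      · rw [← hyz, hz0, div_zero, mul_zero]
        exact zero_mem _
      · exact hcT j hj
    · refine ⟨c * z, mul_mem hc hz, mul_ne_zero hc0 hz0, fun j hj => ?_⟩
      rcases Finset.mem_insert.1 hj with rfl | hj
      · rw [← hyz, mul_assoc, mul_div_cancel₀ _ hz0]
        exact mul_mem hc hy
      · rw [mul_right_comm]
        exact mul_mem (hcT j hj) hz

/-- The iterated `p`-th powers of an algebraic element satisfy a nontrivial linear relation. -/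
theorem IsAlgebraic.exists_sum_mul_pow_pow_eq_zero {K F : Type*} [Field K] [Field F] [Algebra K F]
    {x : F} (hx : IsAlgebraic K x) (p : ℕ) :
    ∃ (T : Finset ℕ) (l : ℕ → K), T.Nonempty ∧ (∀ n ∈ T, l n ≠ 0) ∧
      ∑ n ∈ T, algebraMap K F (l n) * x ^ p ^ n = 0 := by
  have : Module.Finite K (IntermediateField.adjoin K {x}) :=
    IntermediateField.adjoin.finiteDimensional hx.isIntegral
  have hdep := Module.Finite.not_linearIndependent_of_infinite (R := K)
    (fun n : ℕ => IntermediateField.AdjoinSimple.gen K x ^ p ^ n)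
  rw [linearIndependent_iff] at hdep
  push Not at hdep
  obtain ⟨l, hl, hl0⟩ := hdep
  refine ⟨l.support, l, Finsupp.support_nonempty_iff.2 hl0,
    fun n hn => Finsupp.mem_support_iff.1 hn, ?_⟩
  have h := congrArg (algebraMap (IntermediateField.adjoin K {x}) F) hl
  rw [Finsupp.linearCombination_apply, Finsupp.sum, map_sum, map_zero] at h
  rw [← h]
  refine Finset.sum_congr rfl fun n _ => ?_
  rw [Algebra.smul_def, map_mul, map_pow, IntermediateField.AdjoinSimple.algebraMap_gen,
    ← IsScalarTower.algebraMap_apply]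

namespace HahnSeries

variable {E : Type*} [Field E] {Γ : AddSubgroup ℝ}

theorem exists_sum_single_mul_pow_pow_eq_zero (p : ℕ) {x : HahnSeries Γ E}
    (hx : IsAlgebraic (Subfield.closure (Set.range (C : E →+* HahnSeries Γ E) ∪
      {y | ∃ γ : Γ, y = single γ (1 : E)})) x) :
    ∃ (Q : Finset (Σ _ : ℕ, Γ)) (a : (Σ _ : ℕ, Γ) → E), Q.Nonempty ∧ (∀ q ∈ Q, a q ≠ 0) ∧
      ∑ q ∈ Q, single q.2 (a q) * x ^ p ^ q.1 = 0 := by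
  classical
  obtain ⟨T, l, hT, hl, hsum⟩ := hx.exists_sum_mul_pow_pow_eq_zero p
  obtain ⟨c, -, hc0, hcT⟩ := Subfield.exists_common_denominator T
    (fun n => (l n : HahnSeries Γ E)) fun n _ => (l n).2
  have hfin : ∀ n : ℕ, n ∈ T → (c * (l n : HahnSeries Γ E)).support.Finite :=
    fun n hn => finite_support_of_mem_closure (hcT n hn)
  let D : ℕ → Finset Γ := fun n => if h : n ∈ T then (hfin n h).toFinset else ∅
  have hD : ∀ n ∈ T, ∀ δ, δ ∈ D n ↔ (c * (l n : HahnSeries Γ E)).coeff δ ≠ 0 := by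
    intro n hn δ
    simp [D, hn]
  refine ⟨T.sigma D, fun q => (c * (l q.1 : HahnSeries Γ E)).coeff q.2, ?_, ?_, ?_⟩
  · obtain ⟨n, hn⟩ := hT
    have hne : c * (l n : HahnSeries Γ E) ≠ 0 :=
      mul_ne_zero hc0 fun h => hl n hn (Subtype.ext h)
    obtain ⟨δ, hδ⟩ := support_nonempty_iff.2 hne
    exact ⟨⟨n, δ⟩, Finset.mem_sigma.2 ⟨hn, (hD n hn δ).2 hδ⟩⟩
  · rintro ⟨n, δ⟩ hq
    obtain ⟨hn, hδ⟩ := Finset.mem_sigma.1 hq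
    exact (hD n hn δ).1 hδ
  · rw [Finset.sum_sigma]
    have h := congrArg (c * ·) hsum
    simp only [Finset.mul_sum, mul_zero] at h
    rw [← h]
    refine Finset.sum_congr rfl fun n hn => ?_
    dsimp only
    rw [← Finset.sum_mul, ← mul_assoc]
    congr 1
    refine Eq.trans ?_ (eq_sum_single_of_finite_support (hfin n hn)).symm
    simp [D, hn]

/-- Near its least accumulation point `s`, the support of a series satisfying a linear relation
between iterated `p`-th powers is self-similar: every exponent `ε` close to `s` gives rise to
another one whose distance to `s` is smaller by a factor `p ^ j`, with `j` positive and bounded. -/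
theorem exists_mem_support_contracting (p : ℕ) [Fact p.Prime] [CharP E p]
    {x : HahnSeries Γ E} {s : ℝ} (hs : ∀ b < s, {γ ∈ x.support | (γ : ℝ) < b}.Finite)
    {Q : Finset (Σ _ : ℕ, Γ)} {a : (Σ _ : ℕ, Γ) → E} (hQ : Q.Nonempty) (ha : ∀ q ∈ Q, a q ≠ 0)
    (hsum : ∑ q ∈ Q, single q.2 (a q) * x ^ p ^ q.1 = 0) :
    ∃ (η : ℝ) (N : ℕ), 0 < η ∧ ∀ ε ∈ x.support, s - η < (ε : ℝ) → (ε : ℝ) < s →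
      ∃ j, 1 ≤ j ∧ j ≤ N ∧ ∃ ε' ∈ x.support, s - (ε : ℝ) = (p : ℝ) ^ j * (s - (ε' : ℝ)) := by
  classical
  have hp : (0 : ℝ) < p := by exact_mod_cast (Fact.out : p.Prime).pos
  -- the exponents of `x ^ p ^ n` below `p ^ n * s`
  have hpow : ∀ (n : ℕ) (γ : Γ), (γ : ℝ) < (p : ℝ) ^ n * s →
      (γ ∈ (x ^ p ^ n).support ↔ ∃ ε ∈ x.support, γ = p ^ n • ε) := by
    intro n γ hγ
    have h : (γ : ℝ) / (p : ℝ) ^ n < s := by rwa [div_lt_iff₀' (by positivity)]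
    obtain ⟨b, hb, hbs⟩ := exists_between h
    rw [div_lt_iff₀' (by positivity)] at hb
    exact mem_support_pow_char_pow_iff p n (hs b hbs) hb
  let μ : (Σ _ : ℕ, Γ) → ℝ := fun q => (q.2 : ℝ) + (p : ℝ) ^ q.1 * s
  obtain ⟨q₁, hq₁, hmin⟩ := Q.exists_min_image μ hQ
  set m := μ q₁
  obtain ⟨q₀, hq₀, hfirst⟩ := (Q.filter (μ · = m)).exists_min_image (·.1)
    ⟨q₁, Finset.mem_filter.2 ⟨hq₁, rfl⟩⟩
  obtain ⟨hq₀Q, hq₀m⟩ := Finset.mem_filter.1 hq₀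
  -- terms not attaining the minimum do not contribute just below `m`
  have hgap : ∃ θ > 0, ∀ q ∈ Q, μ q ≠ m → ∀ γ : Γ, m - θ < γ → (γ : ℝ) < m →
      (x ^ p ^ q.1).coeff (γ - q.2) = 0 := by
    have hone : ∀ q ∈ Q, ∃ θ > 0, μ q ≠ m → ∀ γ : Γ, m - θ < γ → (γ : ℝ) < m →
        (x ^ p ^ q.1).coeff (γ - q.2) = 0 := by
      intro q hq
      by_cases hqm : μ q = m
      · exact ⟨1, one_pos, fun h => absurd hqm h⟩
      have hlt : m < μ q := lt_of_le_of_ne (hmin q hq) (Ne.symm hqm)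
      have hpq : (0 : ℝ) < (p : ℝ) ^ q.1 := by positivity
      have hb : (m - q.2) / (p : ℝ) ^ q.1 < s := by
        rw [div_lt_iff₀' hpq]
        have : m < (q.2 : ℝ) + (p : ℝ) ^ q.1 * s := hlt
        linarith
      have hfin := hs _ hb
      let Z : Finset ℝ := hfin.toFinset.image fun ε : Γ => m - (q.2 + (p : ℝ) ^ q.1 * ε)
      have hZ : ∀ z ∈ Z, 0 < z := by
        intro z hz
        obtain ⟨ε, hε, rfl⟩ := Finset.mem_image.1 hz
        have h := ((Set.Finite.mem_toFinset _).1 hε).2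
        rw [lt_div_iff₀' hpq] at h
        linarith
      have hθ : ∃ θ > 0, ∀ z ∈ Z, θ ≤ z := by
        by_cases hne : Z.Nonempty
        · exact ⟨Z.min' hne, hZ _ (Z.min'_mem hne), fun z hz => Z.min'_le z hz⟩
        · exact ⟨1, one_pos, fun z hz => absurd ⟨z, hz⟩ hne⟩
      obtain ⟨θ, hθ0, hθ⟩ := hθ
      refine ⟨θ, hθ0, fun _ γ hγ₁ hγ₂ => ?_⟩
      by_contra hne
      have hγlt : ((γ - q.2 : Γ) : ℝ) < (p : ℝ) ^ q.1 * s := by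
        have : m < (q.2 : ℝ) + (p : ℝ) ^ q.1 * s := hlt
        push_cast
        linarith
      obtain ⟨ε, hε, hγε⟩ := (hpow q.1 _ hγlt).1 hne
      have hreal : (γ : ℝ) - q.2 = (p : ℝ) ^ q.1 * ε := by
        have := congrArg (Subtype.val : Γ → ℝ) hγε
        simpa using this
      have hmem : m - (q.2 + (p : ℝ) ^ q.1 * ε) ∈ Z := by
        refine Finset.mem_image.2 ⟨ε, (Set.Finite.mem_toFinset _).2 ⟨hε, ?_⟩, rfl⟩
        rw [lt_div_iff₀' hpq]
        linarith
      have := hθ _ hmem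
      linarith
    choose! θ hθ0 hθ using hone
    obtain ⟨q₂, hq₂, hmin₂⟩ := Q.exists_min_image θ hQ
    exact ⟨θ q₂, hθ0 q₂ hq₂, fun q hq hqm γ hγ₁ hγ₂ =>
      hθ q hq hqm γ (by linarith [hmin₂ q hq]) hγ₂⟩
  obtain ⟨θ, hθ0, hθ⟩ := hgap
  have hp₀ : (0 : ℝ) < (p : ℝ) ^ q₀.1 := by positivity
  refine ⟨θ / (p : ℝ) ^ q₀.1, Q.sup (·.1), by positivity, fun ε hε hε₁ hε₂ => ?_⟩
  have hm₀ : (q₀.2 : ℝ) + (p : ℝ) ^ q₀.1 * s = m := hq₀m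
  set γ : Γ := q₀.2 + p ^ q₀.1 • ε with hγ
  have hγreal : (γ : ℝ) = q₀.2 + (p : ℝ) ^ q₀.1 * ε := by simp [hγ]
  have hdist : m - γ = (p : ℝ) ^ q₀.1 * (s - ε) := by rw [hγreal, ← hm₀]; ring
  have hγ₂ : (γ : ℝ) < m := by
    have : 0 < (p : ℝ) ^ q₀.1 * (s - ε) := mul_pos hp₀ (by linarith)
    linarith
  have hγ₁ : m - θ < γ := by
    have : s - ε < θ / (p : ℝ) ^ q₀.1 := by linarith
    rw [lt_div_iff₀' hp₀] at this
    linarith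
  have hcoeff : ∑ q ∈ Q, a q * (x ^ p ^ q.1).coeff (γ - q.2) = 0 := by
    have := congrArg (fun f : HahnSeries Γ E => f.coeff γ) hsum
    simpa only [coeff_sum, coeff_single_mul, coeff_zero] using this
  have hne₀ : (x ^ p ^ q₀.1).coeff (γ - q₀.2) ≠ 0 := by
    refine (hpow q₀.1 (γ - q₀.2) ?_).2 ⟨ε, hε, by simp [hγ]⟩
    push_cast
    linarith
  obtain ⟨q, hqQ, hqne, hq⟩ : ∃ q ∈ Q, q ≠ q₀ ∧ (x ^ p ^ q.1).coeff (γ - q.2) ≠ 0 := by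
    by_contra! h
    rw [Finset.sum_eq_single_of_mem q₀ hq₀Q fun q hq hne => by rw [h q hq hne, mul_zero]] at hcoeff
    exact mul_ne_zero (ha q₀ hq₀Q) hne₀ hcoeff
  have hqm : μ q = m := by
    by_contra h
    exact hq (hθ q hqQ h γ hγ₁ hγ₂)
  have hmq : (q.2 : ℝ) + (p : ℝ) ^ q.1 * s = m := hqm
  have hle : q₀.1 ≤ q.1 := hfirst q (Finset.mem_filter.2 ⟨hqQ, hqm⟩)
  have hlt : q₀.1 < q.1 := by
    refine lt_of_le_of_ne hle fun h => hqne ?_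
    have h₂ : (q.2 : ℝ) = q₀.2 := by
      rw [← h] at hmq
      linarith
    exact Sigma.ext h.symm (heq_of_eq (Subtype.ext h₂))
  obtain ⟨ε', hε', hγε'⟩ := (hpow q.1 (γ - q.2) (by push_cast; linarith)).1 hq
  have hreal : (γ : ℝ) - q.2 = (p : ℝ) ^ q.1 * ε' := by
    have := congrArg (Subtype.val : Γ → ℝ) hγε'
    simpa using this
  refine ⟨q.1 - q₀.1, by omega, le_trans (Nat.sub_le _ _) (Finset.le_sup (f := (·.1)) hqQ),
    ε', hε', ?_⟩
  refine mul_left_cancel₀ hp₀.ne' ?_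
  rw [← hdist, ← mul_assoc, ← _root_.pow_add, Nat.add_sub_cancel' hle]
  linarith

/-- If `Γ` has no nonzero element divisible by all powers of `p`, a series algebraic over
`E(t ^ Γ)` has only finitely many exponents below any real number. -/
theorem finite_support_lt_of_isAlgebraic (p : ℕ) [Fact p.Prime] [CharP E p]
    (hΓ : ∀ r : ℝ, (∀ n : ℕ, ∃ s ∈ Γ, r = (p : ℝ) ^ n * s) → r = 0)
    {x : HahnSeries Γ E}
    (hx : IsAlgebraic (Subfield.closure (Set.range (C : E →+* HahnSeries Γ E) ∪
      {y | ∃ γ : Γ, y = single γ (1 : E)})) x) (r : ℝ) :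
    {γ ∈ x.support | (γ : ℝ) < r}.Finite := by
  by_contra hinf
  have hp : (0 : ℝ) < p := by exact_mod_cast (Fact.out : p.Prime).pos
  have hp1 : (1 : ℝ) < p := by exact_mod_cast (Fact.out : p.Prime).one_lt
  have hcoe : StrictMono (Subtype.val : Γ → ℝ) := fun _ _ h => h
  have himage : ∀ b : ℝ, Subtype.val '' x.support ∩ Set.Iio b =
      Subtype.val '' {γ ∈ x.support | (γ : ℝ) < b} := by
    intro b
    ext y
    constructor
    · rintro ⟨⟨γ, hγ, rfl⟩, hb⟩
      exact ⟨γ, ⟨hγ, hb⟩, rfl⟩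
    · rintro ⟨γ, ⟨hγ, hb⟩, rfl⟩
      exact ⟨⟨γ, hγ, rfl⟩, hb⟩
  have hWF : (Subtype.val '' x.support : Set ℝ).IsWF :=
    (x.isPWO_support.image_of_monotone hcoe.monotone).isWF
  obtain ⟨s, hs, hacc⟩ := hWF.exists_least_accumulation (r := r) (by
    rw [himage]
    exact Set.Infinite.image hcoe.injective.injOn hinf)
  have hs' : ∀ b < s, {γ ∈ x.support | (γ : ℝ) < b}.Finite := fun b hb =>
    Set.Finite.of_finite_image (himage b ▸ hs b hb) hcoe.injective.injOn
  obtain ⟨Q, a, hQ, ha, hsum⟩ := exists_sum_single_mul_pow_pow_eq_zero p hx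
  obtain ⟨η, N, hη, hstep⟩ := exists_mem_support_contracting p hs' hQ ha hsum
  obtain ⟨_, ⟨ε₀, hε₀, rfl⟩, hlow, hhigh⟩ := hacc (s - η) (by linarith)
  -- exponents at distance `(s - ε₀) / p ^ k` from `s`, for arbitrarily large `k`
  have hchain : ∀ n : ℕ, ∃ k ≥ n, ∃ ε ∈ x.support, s - (ε₀ : ℝ) = (p : ℝ) ^ k * (s - (ε : ℝ)) := by
    intro n
    induction n with
    | zero => exact ⟨0, le_rfl, ε₀, hε₀, by simp⟩
    | succ n ih =>
      obtain ⟨k, hk, ε, hε, hdist⟩ := ih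
      have hpk : (1 : ℝ) ≤ (p : ℝ) ^ k := one_le_pow₀ hp1.le
      have hpos : 0 < s - (ε : ℝ) := by
        by_contra! h
        nlinarith
      obtain ⟨j, hj, -, ε', hε', hdist'⟩ := hstep ε hε (by nlinarith) (by linarith)
      exact ⟨k + j, by omega, ε', hε', by rw [hdist, hdist', _root_.pow_add, mul_assoc]⟩
  have hdiv : (s - ε₀) * ∏ j ∈ Finset.Icc 1 N, ((p : ℝ) ^ j - 1) = 0 := by
    refine hΓ _ fun n => ?_
    obtain ⟨k, hk, ε, hε, hdist⟩ := hchain n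
    have hpk : (1 : ℝ) ≤ (p : ℝ) ^ k := one_le_pow₀ hp1.le
    have hpos : 0 < s - (ε : ℝ) := by
      by_contra! h
      nlinarith
    obtain ⟨j, hj, hjN, ε', hε', hdist'⟩ := hstep ε hε (by nlinarith) (by linarith)
    have hjmem : j ∈ Finset.Icc 1 N := Finset.mem_Icc.2 ⟨hj, hjN⟩
    set c : ℤ := (p : ℤ) ^ (k - n) * (p : ℤ) ^ j *
      ∏ i ∈ (Finset.Icc 1 N).erase j, ((p : ℤ) ^ i - 1) with hc
    refine ⟨c • ((ε' : ℝ) - ε), Γ.zsmul_mem (Γ.sub_mem ε'.2 ε.2) c, ?_⟩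
    have hdiff : (s - (ε : ℝ)) * ((p : ℝ) ^ j - 1) = (p : ℝ) ^ j * ((ε' : ℝ) - ε) := by
      linear_combination -hdist'
    have hkn : (p : ℝ) ^ k = (p : ℝ) ^ n * (p : ℝ) ^ (k - n) := by
      rw [← _root_.pow_add, Nat.add_sub_cancel' hk]
    rw [← Finset.mul_prod_erase _ _ hjmem, hdist, zsmul_eq_mul, hc, hkn]
    push_cast
    linear_combination ((p : ℝ) ^ n * (p : ℝ) ^ (k - n) *
      ∏ i ∈ (Finset.Icc 1 N).erase j, ((p : ℝ) ^ i - 1)) * hdiff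
  rcases mul_eq_zero.1 hdiv with h | h
  · linarith
  · obtain ⟨j, hj, hj0⟩ := Finset.prod_eq_zero_iff.1 h
    have := one_lt_pow₀ hp1 (Nat.one_le_iff_ne_zero.1 (Finset.mem_Icc.1 hj).1)
    linarith

end HahnSeries

/-- Proposition (3.9) of the paper: let `E` be a field of characteristic `p > 0` and `Γ`
an ordered subgroup of `ℝ` with `⋂_n p^n Γ = (0)`.  Every element of `E((t^Γ))` which is
separably algebraic over `E(t^Γ)` has support either finite, or of order type `ω` and
cofinal in `ℝ`. -/
theorem separably_algebraic_support_omega (E : Type*) [Field E] (p : ℕ) [Fact p.Prime]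
    [CharP E p] (Γ : AddSubgroup ℝ)
    (hΓ : ∀ r : ℝ, (∀ n : ℕ, ∃ s ∈ Γ, r = (p : ℝ) ^ n * s) → r = 0)
    (x : HahnSeries ↥Γ E)
    (hx : ∃ P : Polynomial
        ↥(Subfield.closure
            (Set.range (HahnSeries.C : E →+* HahnSeries ↥Γ E) ∪
              {y | ∃ γ : ↥Γ, y = HahnSeries.single γ (1 : E)})),
      P ≠ 0 ∧ P.Separable ∧
        Polynomial.eval₂
          (Subfield.subtype
            (Subfield.closure
              (Set.range (HahnSeries.C : E →+* HahnSeries ↥Γ E) ∪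
                {y | ∃ γ : ↥Γ, y = HahnSeries.single γ (1 : E)}))) x P = 0) :
    x.support.Finite ∨
      ∃ φ : ℕ → ↥Γ, StrictMono φ ∧ Set.range φ = x.support ∧
        ∀ r : ℝ, ∃ k : ℕ, r < (φ k : ℝ) := by
  obtain ⟨P, hP0, -, hPx⟩ := hx
  have hfin := HahnSeries.finite_support_lt_of_isAlgebraic p hΓ (x := x) ⟨P, hP0, hPx⟩
  refine or_iff_not_imp_left.2 fun hinf => ?_
  obtain ⟨φ, hφ, hrange⟩ := Set.Infinite.exists_strictMono_range_eq hinf fun a _ => hfin a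
  refine ⟨φ, hφ, hrange, fun r => ?_⟩
  by_contra! h
  refine hinf ((hfin (r + 1)).subset fun γ hγ => ⟨hγ, ?_⟩)
  obtain ⟨k, rfl⟩ := hrange ▸ hγ
  linarith [h k]
end
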